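/- Let 0 < α ≤ 1. For every populated multi-index β' and every n ∈ ℕ² with |n| < |β'| (where |(0,0)| = 0), one has (1/2)|n| + (1/4)·𝟙_{n=(0,0)} − 1 < |β'|_≺. -/

import Mathlib

open Finsupp

noncomputable section

/-- The index set `I`: symbols `z_k` for `k : ℕ` (left summand) and `z_n` for
`n ∈ ℕ² \ {(0,0)}` (right summand). -/
abbrev RSIdx : Type := ℕ ⊕ {n : ℕ × ℕ // n ≠ (0, 0)}

/-- Multi-indices: finitely supported functions from the index set to `ℕ`. -/
abbrev MIdx : Type := RSIdx →₀ ℕ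

/-- The unit multi-index `e_k`. -/
def eK (k : ℕ) : MIdx := Finsupp.single (Sum.inl k) 1

/-- The unit multi-index `e_n` for `n ≠ (0,0)`. -/
def eN (n : {n : ℕ × ℕ // n ≠ (0, 0)}) : MIdx := Finsupp.single (Sum.inr n) 1

/-- The scaled length `[β] = Σ_k k·β(k) − Σ_{n≠(0,0)} β(n)`. -/
def slen (β : MIdx) : ℤ :=
  β.sum fun i m =>
    match i with
    | Sum.inl k => (k : ℤ) * (m : ℤ)
    | Sum.inr _ => -(m : ℤ)

/-- The parabolic length `|n| = n₁ + 2 n₂` of `n ∈ ℕ²`. -/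
def plen (n : ℕ × ℕ) : ℕ := n.1 + 2 * n.2

/-- The polynomial part `|β|_p = Σ_{n≠(0,0)} |n|·β(n)`. -/
def polyPart (β : MIdx) : ℕ :=
  β.sum fun i m =>
    match i with
    | Sum.inl _ => 0
    | Sum.inr n => plen n.val * m

/-- The homogeneity `|β| = α(1+[β]) + |β|_p`. -/
def homog (α : ℝ) (β : MIdx) : ℝ := α * (1 + (slen β : ℝ)) + (polyPart β : ℝ)

/-- `β` is purely polynomial iff `β = e_n` for some `n ≠ (0,0)`. -/
def PurelyPoly (β : MIdx) : Prop := ∃ n, β = eN n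

/-- `β` is populated iff it is purely polynomial or `[β] ≥ 0`. -/
def Populated (β : MIdx) : Prop := PurelyPoly β ∨ 0 ≤ slen β

/-- The ordinal `|β|_≺ = [β] + (1/2)|β|_p + (1/4)β(0)`. -/
def precNorm (β : MIdx) : ℝ :=
  (slen β : ℝ) + (polyPart β : ℝ) / 2 + (β (Sum.inl 0) : ℝ) / 4

/-! Since `[β] ≥ -1` for populated `β`, the homogeneity `|β| = α(1 + [β]) + |β|_p` is nondecreasing
in `α`, and at `α = 2` it is `2(1 + |β|_≺) - β(0)/2`. Hence `|n| < |β|` gives `|n|/2 - 1 < |β|_≺`,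
which settles `n ≠ (0,0)`. For `n = (0,0)` the claim is `|β|_≺ > -3/4`, and in fact `|β|_≺ ≥ -1/2`:
only `β = e_m` can make `[β]` negative, and then `|β|_≺ = |m|/2 - 1` with `|m| ≥ 1`. -/

theorem plen_eq_zero_iff {n : ℕ × ℕ} : plen n = 0 ↔ n = (0, 0) := by
  simp [plen, Prod.ext_iff]

section UnitMultiIndex

variable (m : {n : ℕ × ℕ // n ≠ (0, 0)})

theorem slen_eN : slen (eN m) = -1 := by
  simp [slen, eN]

theorem polyPart_eN : polyPart (eN m) = plen m.val := by
  simp [polyPart, eN]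

theorem precNorm_eN : precNorm (eN m) = (plen m.val : ℝ) / 2 - 1 := by
  have coeff_zero : eN m (Sum.inl 0) = 0 := by simp [eN]
  rw [precNorm, slen_eN, polyPart_eN, coeff_zero]
  push_cast
  ring

end UnitMultiIndex

theorem slen_add_half_polyPart_le_precNorm (β : MIdx) :
    (slen β : ℝ) + (polyPart β : ℝ) / 2 ≤ precNorm β :=
  le_add_of_nonneg_right (by positivity)

theorem slen_le_precNorm (β : MIdx) : (slen β : ℝ) ≤ precNorm β :=
  (le_add_of_nonneg_right (by positivity)).trans (slen_add_half_polyPart_le_precNorm β)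

theorem Populated.neg_one_le_slen {β : MIdx} (hβ : Populated β) : -1 ≤ slen β := by
  rcases hβ with ⟨m, rfl⟩ | hslen
  · exact (slen_eN m).ge
  · exact (neg_one_lt_zero.trans_le hslen).le

theorem Populated.neg_half_le_precNorm {β : MIdx} (hβ : Populated β) :
    -(1 / 2) ≤ precNorm β := by
  rcases hβ with ⟨m, rfl⟩ | hslen
  · have one_le_plen : (1 : ℝ) ≤ plen m.val := by
      exact_mod_cast Nat.one_le_iff_ne_zero.mpr (plen_eq_zero_iff.not.mpr m.property)
    rw [precNorm_eN]
    linarith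
  · have precNorm_nonneg : 0 ≤ precNorm β :=
      (Int.cast_nonneg hslen).trans (slen_le_precNorm β)
    linarith

theorem homog_le_two_mul_one_add_precNorm {α : ℝ} (hα : α ≤ 2) {β : MIdx}
    (hβ : -1 ≤ slen β) : homog α β ≤ 2 * (1 + precNorm β) := by
  have one_add_slen_nonneg : (0 : ℝ) ≤ 1 + slen β := by
    exact_mod_cast neg_le_iff_add_nonneg'.mp hβ
  calc homog α β ≤ 2 * (1 + slen β) + polyPart β := by
        unfold homog
        gcongr
    _ = 2 * (1 + (slen β + (polyPart β : ℝ) / 2)) := by ring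
    _ ≤ 2 * (1 + precNorm β) := by
        gcongr
        exact slen_add_half_polyPart_le_precNorm β

theorem statement10_general {α : ℝ} (hα : α ≤ 2) {β : MIdx} (hβ : Populated β) {n : ℕ × ℕ}
    (hn : (plen n : ℝ) < homog α β) :
    (plen n : ℝ) / 2 + (if n = (0, 0) then (1 / 4 : ℝ) else 0) - 1 < precNorm β := by
  split_ifs with hzero
  · have precNorm_lower := hβ.neg_half_le_precNorm
    rw [plen_eq_zero_iff.mpr hzero, Nat.cast_zero]
    linarith
  · have homog_upper := homog_le_two_mul_one_add_precNorm hα hβ.neg_one_le_slen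
    linarith

/-- For `0 < α ≤ 1`, every populated `β'` and every `n ∈ ℕ²` with `|n| < |β'|`, one
has `(1/2)|n| + (1/4)·𝟙_{n=(0,0)} − 1 < |β'|_≺`. -/
theorem statement10 (α : ℝ) (hα0 : 0 < α) (hα1 : α ≤ 1) (β' : MIdx)
    (hβ' : Populated β') (n : ℕ × ℕ) (hn : (plen n : ℝ) < homog α β') :
    (plen n : ℝ) / 2 + (if n = (0, 0) then (1 / 4 : ℝ) else 0) - 1
      < precNorm β' :=
  statement10_general (hα1.trans one_le_two) hβ' hn
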